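/- arXiv:math/0504345 — 3 statements merged into one kernel-verified Lean document; each statement's English description precedes it below -/
import Mathlib

section
/- For each integer k ≥ 1 let x_k = 2 + 4k² − 2k and y_k = −2k². For real numbers a, b, the set { a·x_k + b·y_k : k ∈ ℕ, k ≥ 1 } ⊆ ℝ is bounded below if and only if 2a > b, or (b = 2a and a ≤ 0). -/
/-- For `x_k = 2 + 4k² − 2k` and `y_k = −2k²` (`k ≥ 1`), the set
`{ a·x_k + b·y_k : k ≥ 1 }` is bounded below iff `2a > b`, or `b = 2a` and `a ≤ 0`. -/
theorem bddBelow_iff (a b : ℝ) :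
    BddBelow {z : ℝ | ∃ k : ℕ, 1 ≤ k ∧
        z = a * (2 + 4 * (k : ℝ) ^ 2 - 2 * (k : ℝ)) + b * (-2 * (k : ℝ) ^ 2)} ↔
      (2 * a > b ∨ (b = 2 * a ∧ a ≤ 0)) := by
  constructor
  · rintro ⟨M, hM⟩
    have h : ∀ k : ℕ, 1 ≤ k →
        M ≤ a * (2 + 4 * (k : ℝ) ^ 2 - 2 * (k : ℝ)) + b * (-2 * (k : ℝ) ^ 2) :=
      fun k hk => hM ⟨k, hk, rfl⟩
    rcases lt_trichotomy b (2 * a) with hb | hb | hb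
    · exact Or.inl hb
    · refine Or.inr ⟨hb, ?_⟩
      by_contra! ha
      obtain ⟨n, hn⟩ := exists_nat_gt ((2 * a - M) / (2 * a))
      rw [div_lt_iff₀ (by linarith)] at hn
      have h1 := h (n + 1) (by omega)
      push_cast at h1
      subst hb
      nlinarith
    · exfalso
      have hd : 0 < b - 2 * a := by linarith
      obtain ⟨n, hn⟩ := exists_nat_gt ((1 + |a| + |2 * a - M|) / (b - 2 * a))
      rw [div_lt_iff₀ hd] at hn
      have h1 := h (n + 1) (by omega)
      push_cast at h1
      have h2 := neg_abs_le a
      have h3 := le_abs_self (2 * a - M)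
      have h4 := abs_nonneg (2 * a - M)
      have hn0 : (0 : ℝ) ≤ n := n.cast_nonneg
      have h5 : 1 + |2 * a - M| < (b - 2 * a) * (n + 1) + a := by nlinarith
      have h6 : 0 ≤ n * ((b - 2 * a) * (n + 1) + a) := mul_nonneg hn0 (by linarith)
      nlinarith
  · rintro (hb | ⟨rfl, ha⟩)
    · have hc : 0 < 2 * a - b := by linarith
      refine ⟨2 * a - a ^ 2 / (2 * (2 * a - b)), ?_⟩
      rintro z ⟨k, -, rfl⟩
      have h : a * (2 + 4 * (k : ℝ) ^ 2 - 2 * (k : ℝ)) + b * (-2 * (k : ℝ) ^ 2)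
          - (2 * a - a ^ 2 / (2 * (2 * a - b)))
          = (2 * (2 * a - b) * k - a) ^ 2 / (2 * (2 * a - b)) := by
        obtain ⟨c, hcc⟩ : ∃ c, c = 2 * a - b := ⟨_, rfl⟩
        have hb2 : b = 2 * a - c := by linarith
        rw [← hcc] at hc ⊢
        rw [hb2]
        have := hc.ne'
        field_simp
        ring
      have h2 : 0 ≤ (2 * (2 * a - b) * k - a) ^ 2 / (2 * (2 * a - b)) := by positivity
      linarith
    · refine ⟨2 * a, ?_⟩
      rintro z ⟨k, -, rfl⟩
      have hk : (0 : ℝ) ≤ k := k.cast_nonneg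
      nlinarith [mul_nonneg (neg_nonneg.2 ha) hk]
end

section
/- Let g be a natural number. Let F be the free group on the index set Fin g ⊕ Fin g, with generators a_i = of(inl i) and b_i = of(inr i) for i = 0,…,g−1. Let R ⊆ F consist of the surface relation ∏_{i=0}^{g−1} (a_i · b_i · a_i⁻¹ · b_i⁻¹) (product taken in increasing order of i) together with the g elements b_0, …, b_{g−1}. Then the presented group F / (normal closure of R) is isomorphic to the free group on Fin g, via a_i ↦ of(i). -/
namespace SurfaceToFree

variable (g : ℕ)

/-- The generators `a_i` of the free group on `Fin g ⊕ Fin g`. -/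
def a (i : Fin g) : FreeGroup (Fin g ⊕ Fin g) := FreeGroup.of (Sum.inl i)

/-- The generators `b_i` of the free group on `Fin g ⊕ Fin g`. -/
def b (i : Fin g) : FreeGroup (Fin g ⊕ Fin g) := FreeGroup.of (Sum.inr i)

/-- The surface relation `∏_{i=0}^{g−1} a_i b_i a_i⁻¹ b_i⁻¹`, the product taken in
increasing order of `i`. -/
def surfaceRel : FreeGroup (Fin g ⊕ Fin g) :=
  ((List.finRange g).map fun i => a g i * b g i * (a g i)⁻¹ * (b g i)⁻¹).prod

/-- The relation set: the surface relation together with `b_0, …, b_{g−1}`. -/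
def rels : Set (FreeGroup (Fin g ⊕ Fin g)) := {surfaceRel g} ∪ Set.range (b g)

/-- The quotient of the free group on `a_0, b_0, …, a_{g−1}, b_{g−1}` by the normal
closure of the surface relation and the `b_i` is free of rank `g`, via `a_i ↦ of i`. -/
theorem presentedGroup_iso_freeGroup :
    ∃ e : PresentedGroup (rels g) ≃* FreeGroup (Fin g),
      ∀ i : Fin g, e (PresentedGroup.of (Sum.inl i)) = FreeGroup.of i := by
  have h : ∀ r ∈ rels g, FreeGroup.lift
      (Sum.elim (fun i => FreeGroup.of i) (fun _ => 1) : Fin g ⊕ Fin g → FreeGroup (Fin g)) r = 1 := by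
    rintro r (hr | ⟨i, rfl⟩)
    · rw [Set.mem_singleton_iff] at hr
      subst hr
      rw [surfaceRel, map_list_prod]
      apply List.prod_eq_one
      intro x hx
      simp only [List.map_map, List.mem_map] at hx
      obtain ⟨i, _, rfl⟩ := hx
      simp [a, b]
    · simp [b]
  let φ := PresentedGroup.toGroup h
  let ψ : FreeGroup (Fin g) →* PresentedGroup (rels g) :=
    FreeGroup.lift fun i => PresentedGroup.of (Sum.inl i)
  have hφ : ∀ x, φ (PresentedGroup.of x) =
      (Sum.elim (fun i => FreeGroup.of i) (fun _ => 1) : Fin g ⊕ Fin g → FreeGroup (Fin g)) x :=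
    fun x => PresentedGroup.toGroup.of h
  refine ⟨MonoidHom.toMulEquiv φ ψ ?_ ?_, fun i => hφ (Sum.inl i)⟩
  · apply PresentedGroup.ext
    rintro (i | i)
    · simp [hφ, ψ]
    · have hb : (PresentedGroup.of (Sum.inr i) : PresentedGroup (rels g)) = 1 :=
        PresentedGroup.one_of_mem (Or.inr ⟨i, rfl⟩)
      simp [hb]
  · apply FreeGroup.ext_hom
    intro i
    simp [hφ, ψ]

end SurfaceToFree
end

section
/- Let n be a natural number. Define the additive group endomorphism H of ℤ × ℤ by H(u,v) = (v, −u + (2−n)·v) (the linear map with matrix [[0,1],[−1,2−n]] acting on column vectors). Then the quotient of ℤ × ℤ by the range of the endomorphism H − id (i.e. by the subgroup { H(w) − w : w ∈ ℤ × ℤ }) is isomorphic, as an additive group, to ℤ/nℤ. -/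
/-- Let `H : ℤ × ℤ → ℤ × ℤ` be the additive endomorphism with matrix
`[[0,1],[−1,2−n]]`, i.e. `H(u,v) = (v, −u + (2−n)v)`. Then the quotient of `ℤ × ℤ` by
the range of `H − id` is isomorphic to `ℤ/nℤ`. -/
theorem quotient_range_sub_id_iso_zmod (n : ℕ) (H : ℤ × ℤ →+ ℤ × ℤ)
    (hH : ∀ w : ℤ × ℤ, H w = (w.2, -w.1 + (2 - (n : ℤ)) * w.2)) :
    Nonempty (((ℤ × ℤ) ⧸ (H - AddMonoidHom.id (ℤ × ℤ)).range) ≃+ ZMod n) := by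
  let f : ℤ × ℤ →+ ZMod n :=
    (Int.castAddHom (ZMod n)).comp (AddMonoidHom.snd ℤ ℤ - AddMonoidHom.fst ℤ ℤ)
  have hf : ∀ w : ℤ × ℤ, f w = ((w.2 - w.1 : ℤ) : ZMod n) := fun w => rfl
  have hs : Function.Surjective f := by
    intro z
    obtain ⟨k, rfl⟩ := ZMod.intCast_surjective z
    exact ⟨(0, k), by simp [hf]⟩
  have hk : (H - AddMonoidHom.id (ℤ × ℤ)).range = f.ker := by
    ext ⟨a, b⟩
    rw [AddMonoidHom.mem_ker, hf, ZMod.intCast_zmod_eq_zero_iff_dvd, AddMonoidHom.mem_range]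
    constructor
    · rintro ⟨⟨u, v⟩, h⟩
      rw [AddMonoidHom.sub_apply, hH, AddMonoidHom.id_apply, Prod.mk_sub_mk, Prod.mk.injEq] at h
      obtain ⟨h1, h2⟩ := h
      exact ⟨-v, by rw [← h1, ← h2]; ring⟩
    · rintro ⟨k, h⟩
      refine ⟨(-k - a, -k), ?_⟩
      rw [AddMonoidHom.sub_apply, hH, AddMonoidHom.id_apply, Prod.mk_sub_mk, Prod.mk.injEq]
      constructor
      · ring
      · simp only at h ⊢
        linear_combination -h
  exact ⟨(QuotientAddGroup.quotientAddEquivOfEq hk).trans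
    (QuotientAddGroup.quotientKerEquivOfSurjective f hs)⟩
end
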